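/- (Lemma 2.1, Benner–Breiten moment matching.) Let σ_1, …, σ_k : ℂ and assume Q is symmetric, and that for each i the matrices G(σ_i), G(2σ_i), Wᵀ * G(σ_i) * V and Wᵀ * G(2σ_i) * V are invertible. Suppose the column span of V contains x1(σ_i) and x2(σ_i, σ_i) for all i, and the column span of W contains y1(2σ_i) and y2(σ_i, σ_i) for all i. Then for each i the reduced quadratic-bilinear system satisfies the Hermite interpolation conditions: H1(σ_i) = Ĥ1(σ_i), H1(2σ_i) = Ĥ1(2σ_i), H2(σ_i, σ_i) = Ĥ2(σ_i, σ_i), deriv (fun s => H2(s, σ_i)) σ_i = deriv (fun s => Ĥ2(s, σ_i)) σ_i, and deriv (fun s => H2(σ_i, s)) σ_i = deriv (fun s => Ĥ2(σ_i, s)) σ_i. -/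

import Mathlib

open Matrix
open scoped Kronecker

noncomputable section

/-- Kronecker product of vectors: `(u ⊗ v) (l, j) = u l * v j`. -/
def vkron {n : ℕ} (u v : Fin n → ℂ) : Fin n × Fin n → ℂ :=
  fun p => u p.1 * v p.2

/-- The matrix pencil `G(s) = s • E - A`. -/
def Gm {n : ℕ} (E A : Matrix (Fin n) (Fin n) ℂ) (s : ℂ) : Matrix (Fin n) (Fin n) ℂ :=
  s • E - A

/-- Primal state of the first subsystem: `x1(s) = G(s)⁻¹ *ᵥ B`. -/
def x1 {n : ℕ} (E A : Matrix (Fin n) (Fin n) ℂ) (B : Fin n → ℂ) (s : ℂ) : Fin n → ℂ :=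
  (Gm E A s)⁻¹ *ᵥ B

/-- First-order transfer function `H1(s) = C ⬝ᵥ x1(s)`. -/
def H1 {n : ℕ} (E A : Matrix (Fin n) (Fin n) ℂ) (B C : Fin n → ℂ) (s : ℂ) : ℂ :=
  C ⬝ᵥ x1 E A B s

/-- Second-order input term `B₂(s1, s2)`. -/
def B2 {n : ℕ} (E A N : Matrix (Fin n) (Fin n) ℂ) (Q : Matrix (Fin n) (Fin n × Fin n) ℂ)
    (B : Fin n → ℂ) (s1 s2 : ℂ) : Fin n → ℂ :=
  Q *ᵥ vkron (x1 E A B s1) (x1 E A B s2) + (1/2 : ℂ) • (N *ᵥ (x1 E A B s1 + x1 E A B s2))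

/-- Primal state of the second subsystem: `x2(s1, s2) = G(s1+s2)⁻¹ *ᵥ B₂(s1, s2)`. -/
def x2 {n : ℕ} (E A N : Matrix (Fin n) (Fin n) ℂ) (Q : Matrix (Fin n) (Fin n × Fin n) ℂ)
    (B : Fin n → ℂ) (s1 s2 : ℂ) : Fin n → ℂ :=
  (Gm E A (s1 + s2))⁻¹ *ᵥ B2 E A N Q B s1 s2

/-- Second-order (symmetric) transfer function `H2(s1, s2) = C ⬝ᵥ x2(s1, s2)`. -/
def H2 {n : ℕ} (E A N : Matrix (Fin n) (Fin n) ℂ) (Q : Matrix (Fin n) (Fin n × Fin n) ℂ)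
    (B C : Fin n → ℂ) (s1 s2 : ℂ) : ℂ :=
  C ⬝ᵥ x2 E A N Q B s1 s2

/-- Dual state of the first subsystem: `y1(s) = (G(s)ᵀ)⁻¹ *ᵥ C`. -/
def y1 {n : ℕ} (E A : Matrix (Fin n) (Fin n) ℂ) (C : Fin n → ℂ) (s : ℂ) : Fin n → ℂ :=
  ((Gm E A s)ᵀ)⁻¹ *ᵥ C

/-- Mode-2 matricization: `Q⁽²⁾ j (l, i) = Q i (l, j)`. -/
def mode2 {n : ℕ} (Q : Matrix (Fin n) (Fin n × Fin n) ℂ) : Matrix (Fin n) (Fin n × Fin n) ℂ :=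
  fun j p => Q p.2 (p.1, j)

/-- Dual output term `C₂(s1, s2)`. -/
def C2 {n : ℕ} (E A N : Matrix (Fin n) (Fin n) ℂ) (Q : Matrix (Fin n) (Fin n × Fin n) ℂ)
    (B C : Fin n → ℂ) (s1 s2 : ℂ) : Fin n → ℂ :=
  mode2 Q *ᵥ vkron (x1 E A B s2) (y1 E A C (s1 + s2)) +
    (1/2 : ℂ) • (Nᵀ *ᵥ y1 E A C (s1 + s2))

/-- Dual state of the second subsystem: `y2(s1, s2) = (G(s1)ᵀ)⁻¹ *ᵥ C₂(s1, s2)`. -/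
def y2 {n : ℕ} (E A N : Matrix (Fin n) (Fin n) ℂ) (Q : Matrix (Fin n) (Fin n × Fin n) ℂ)
    (B C : Fin n → ℂ) (s1 s2 : ℂ) : Fin n → ℂ :=
  ((Gm E A s1)ᵀ)⁻¹ *ᵥ C2 E A N Q B C s1 s2

/-- `Q` is symmetric: `Q *ᵥ (u ⊗ v) = Q *ᵥ (v ⊗ u)` for all `u, v`. -/
def QSymm {n : ℕ} (Q : Matrix (Fin n) (Fin n × Fin n) ℂ) : Prop :=
  ∀ u v : Fin n → ℂ, Q *ᵥ vkron u v = Q *ᵥ vkron v u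

/-- Euclidean (ℓ²) norm of a vector in `Fin n → ℂ`. -/
def vnorm {n : ℕ} (v : Fin n → ℂ) : ℝ := ‖(WithLp.equiv 2 (Fin n → ℂ)).symm v‖

/-- ℓ²-induced operator norm of a square complex matrix. -/
def mnorm {n : ℕ} (M : Matrix (Fin n) (Fin n) ℂ) : ℝ := ‖Matrix.toEuclideanCLM (𝕜 := ℂ) M‖

/-! If the solution `M⁻¹ b` of a linear system lies in the range of `V`, then every Petrov–Galerkin
projection of the system onto that range reproduces it: `V (Wᵀ M V)⁻¹ Wᵀ b = M⁻¹ b`. Applied to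
the pencil, and dually to its transpose, this lifts each reduced state `x̂1`, `x̂2`, `ŷ1`, `ŷ2` to
the corresponding full one. The transfer functions and the derivative
`∂₁ H2(s, t) = -y2(s, t)ᵀ E x1(s) - y1(s + t)ᵀ E x2(s, t)` are bilinear in primal and dual states,
so they are preserved as well; the dual states thus provide the Hermite conditions although the
derivatives of the primal states need not lie in the range of `V`. -/

section PetrovGalerkin

variable {R m p : Type*} [CommRing R] [Fintype m] [Fintype p]

theorem dotProduct_transpose_mul_mul_mulVec (M : Matrix m m R) (V W : Matrix m p R)
    (x y : p → R) : y ⬝ᵥ ((Wᵀ * M * V) *ᵥ x) = (W *ᵥ y) ⬝ᵥ (M *ᵥ (V *ᵥ x)) := by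
  rw [← mulVec_mulVec, ← mulVec_mulVec, dotProduct_transpose_mulVec, dotProduct_comm]

variable [DecidableEq m] [DecidableEq p]

theorem dotProduct_inv_mulVec (M : Matrix m m R) (c b : m → R) :
    c ⬝ᵥ (M⁻¹ *ᵥ b) = (Mᵀ⁻¹ *ᵥ c) ⬝ᵥ b := by
  rw [← transpose_nonsing_inv, dotProduct_mulVec, mulVec_transpose]

theorem mulVec_inv_mul_mul_mulVec {M : Matrix m m R} {L : Matrix p m R} {V : Matrix m p R}
    (hM : IsUnit M) (hr : IsUnit (L * M * V)) {b : m → R} (hb : ∃ c, M⁻¹ *ᵥ b = V *ᵥ c) :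
    V *ᵥ ((L * M * V)⁻¹ *ᵥ (L *ᵥ b)) = M⁻¹ *ᵥ b := by
  obtain ⟨c, hc⟩ := hb
  have b_eq : b = M *ᵥ (V *ᵥ c) := by
    rw [← hc, mulVec_mulVec, mul_nonsing_inv _ ((isUnit_iff_isUnit_det _).1 hM), one_mulVec]
  have reduced_rhs : L *ᵥ b = (L * M * V) *ᵥ c := by
    rw [b_eq, mulVec_mulVec, mulVec_mulVec]
  rw [reduced_rhs, mulVec_mulVec _ _ (L * M * V),
    nonsing_inv_mul _ ((isUnit_iff_isUnit_det _).1 hr), one_mulVec, hc]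

theorem mulVec_transpose_inv_mul_mul_mulVec {M : Matrix m m R} {V W : Matrix m p R}
    (hM : IsUnit M) (hr : IsUnit (Wᵀ * M * V)) {c : m → R} (hc : ∃ d, Mᵀ⁻¹ *ᵥ c = W *ᵥ d) :
    W *ᵥ ((Wᵀ * M * V)ᵀ⁻¹ *ᵥ (Vᵀ *ᵥ c)) = Mᵀ⁻¹ *ᵥ c := by
  have transpose_eq : (Wᵀ * M * V)ᵀ = Vᵀ * Mᵀ * W := by
    rw [transpose_mul, transpose_mul, transpose_transpose, Matrix.mul_assoc]
  have hr' : IsUnit (Vᵀ * Mᵀ * W) := transpose_eq ▸ (isUnit_transpose _).2 hr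
  rw [transpose_eq]
  exact mulVec_inv_mul_mul_mulVec ((isUnit_transpose M).2 hM) hr' hc

end PetrovGalerkin

section MatrixCalculus

variable {𝕜 m : Type*} [NontriviallyNormedField 𝕜] [CompleteSpace 𝕜] [Fintype m] [DecidableEq m]

attribute [local instance] Matrix.linftyOpNormedRing Matrix.linftyOpNormedAlgebra

theorem hasDerivAt_matrix_inv {M : 𝕜 → Matrix m m 𝕜} {M' : Matrix m m 𝕜} {s : 𝕜}
    (hM : HasDerivAt M M' s) (hs : IsUnit (M s)) :
    HasDerivAt (fun τ => (M τ)⁻¹) (-((M s)⁻¹ * M' * (M s)⁻¹)) s := by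
  obtain ⟨u, hu⟩ := hs
  have inv_eq : (↑u⁻¹ : Matrix m m 𝕜) = (M s)⁻¹ := by rw [← hu, coe_units_inv]
  -- The uniformity must be that of the norm; instance search would take the product uniformity.
  have : @CompleteSpace (Matrix m m 𝕜) PseudoMetricSpace.toUniformSpace :=
    FiniteDimensional.complete 𝕜 _
  have ringInverse_deriv := hasFDerivAt_ringInverse (𝕜 := 𝕜) u
  rw [hu] at ringInverse_deriv
  simp only [nonsing_inv_eq_ringInverse] at inv_eq ⊢
  refine (ringInverse_deriv.comp_hasDerivAt s hM).congr_deriv ?_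
  simp [inv_eq]

theorem hasDerivAt_inv_mulVec {M : 𝕜 → Matrix m m 𝕜} {M' : Matrix m m 𝕜} {b : 𝕜 → m → 𝕜}
    {b' : m → 𝕜} {s : 𝕜} (hM : HasDerivAt M M' s) (hs : IsUnit (M s)) (hb : HasDerivAt b b' s) :
    HasDerivAt (fun τ => (M τ)⁻¹ *ᵥ b τ) ((M s)⁻¹ *ᵥ (b' - M' *ᵥ ((M s)⁻¹ *ᵥ b s))) s := by
  have product_rule := (mulVecBilin 𝕜 𝕜).toContinuousBilinearMap.hasDerivAt_of_bilinear
    (fun _ => hasDerivAt_matrix_inv hM hs) (fun _ => hb)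
  refine product_rule.congr_deriv ?_
  simp [mulVec_sub, Matrix.mul_assoc, ← sub_eq_add_neg]

theorem hasDerivAt_Gm {n : ℕ} (E A : Matrix (Fin n) (Fin n) ℂ) (s : ℂ) :
    HasDerivAt (Gm E A) E s :=
  (((hasDerivAt_id' s).smul_const E).sub_const A).congr_deriv (one_smul ℂ E)

theorem hasDerivAt_Gm_add_const {n : ℕ} (E A : Matrix (Fin n) (Fin n) ℂ) (s t : ℂ) :
    HasDerivAt (fun τ => Gm E A (τ + t)) E s :=
  HasDerivAt.comp_add_const s t (hasDerivAt_Gm E A (s + t))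

end MatrixCalculus

section QuadraticTerm

variable {n r : ℕ}

theorem mode2_mulVec_vkron_dotProduct (Q : Matrix (Fin n) (Fin n × Fin n) ℂ) (x y z : Fin n → ℂ) :
    (mode2 Q *ᵥ vkron x y) ⬝ᵥ z = y ⬝ᵥ (Q *ᵥ vkron x z) := by
  simp only [mulVec, dotProduct, mode2, vkron, Fintype.sum_prod_type, Finset.sum_mul,
    Finset.mul_sum]
  rw [Finset.sum_comm_cycle]
  refine Finset.sum_congr rfl fun i _ => Finset.sum_comm.trans ?_
  exact Finset.sum_congr rfl fun l _ => Finset.sum_congr rfl fun j _ => by ring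

theorem kronecker_mulVec_vkron (V : Matrix (Fin n) (Fin r) ℂ) (u v : Fin r → ℂ) :
    (V ⊗ₖ V) *ᵥ vkron u v = vkron (V *ᵥ u) (V *ᵥ v) := by
  ext ⟨i, j⟩
  simp only [mulVec, dotProduct, vkron, kroneckerMap_apply, Fintype.sum_prod_type,
    Finset.sum_mul_sum]
  exact Finset.sum_congr rfl fun a _ => Finset.sum_congr rfl fun b _ => by ring

theorem mul_kronecker_mulVec_vkron (V W : Matrix (Fin n) (Fin r) ℂ)
    (Q : Matrix (Fin n) (Fin n × Fin n) ℂ) (u v : Fin r → ℂ) :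
    (Wᵀ * Q * (V ⊗ₖ V)) *ᵥ vkron u v = Wᵀ *ᵥ (Q *ᵥ vkron (V *ᵥ u) (V *ᵥ v)) := by
  rw [← mulVec_mulVec, ← mulVec_mulVec, kronecker_mulVec_vkron]

theorem QSymm.mul_kronecker {Q : Matrix (Fin n) (Fin n × Fin n) ℂ} (hQ : QSymm Q)
    (V W : Matrix (Fin n) (Fin r) ℂ) : QSymm (Wᵀ * Q * (V ⊗ₖ V)) := fun u v => by
  rw [mul_kronecker_mulVec_vkron, hQ, mul_kronecker_mulVec_vkron]

/-- The matrix of `z ↦ Q (x ⊗ z) + N z / 2`. For symmetric `Q` this is how a variation `z` of one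
of the two first-order states enters `B₂` while the other state is held at `x`; the transpose
produces the dual input `C₂`. -/
def linearizedInput (N : Matrix (Fin n) (Fin n) ℂ) (Q : Matrix (Fin n) (Fin n × Fin n) ℂ)
    (x : Fin n → ℂ) : Matrix (Fin n) (Fin n) ℂ :=
  Matrix.of (fun i j => ∑ l, x l * Q i (l, j)) + (1 / 2 : ℂ) • N

theorem linearizedInput_mulVec (N : Matrix (Fin n) (Fin n) ℂ)
    (Q : Matrix (Fin n) (Fin n × Fin n) ℂ) (x z : Fin n → ℂ) :
    linearizedInput N Q x *ᵥ z = Q *ᵥ vkron x z + (1 / 2 : ℂ) • (N *ᵥ z) := by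
  rw [linearizedInput, add_mulVec, smul_mulVec]
  congr 1
  ext i
  simp only [mulVec, dotProduct, vkron, of_apply, Fintype.sum_prod_type, Finset.sum_mul]
  rw [Finset.sum_comm]
  exact Finset.sum_congr rfl fun l _ => Finset.sum_congr rfl fun j _ => by ring

theorem linearizedInput_transpose_mulVec (N : Matrix (Fin n) (Fin n) ℂ)
    (Q : Matrix (Fin n) (Fin n × Fin n) ℂ) (x y : Fin n → ℂ) :
    (linearizedInput N Q x)ᵀ *ᵥ y = mode2 Q *ᵥ vkron x y + (1 / 2 : ℂ) • (Nᵀ *ᵥ y) := by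
  refine dotProduct_eq _ _ fun z => ?_
  rw [dotProduct_comm, dotProduct_transpose_mulVec, linearizedInput_mulVec, dotProduct_add,
    dotProduct_smul, add_dotProduct, smul_dotProduct, mode2_mulVec_vkron_dotProduct,
    dotProduct_comm (Nᵀ *ᵥ y), dotProduct_transpose_mulVec]

theorem linearizedInput_transpose_mul_mul (N : Matrix (Fin n) (Fin n) ℂ)
    (Q : Matrix (Fin n) (Fin n × Fin n) ℂ) (V W : Matrix (Fin n) (Fin r) ℂ) (x : Fin r → ℂ) :
    linearizedInput (Wᵀ * N * V) (Wᵀ * Q * (V ⊗ₖ V)) x =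
      Wᵀ * linearizedInput N Q (V *ᵥ x) * V := by
  refine mulVec_injective (funext fun z => ?_)
  rw [linearizedInput_mulVec, mul_kronecker_mulVec_vkron, ← mulVec_mulVec, ← mulVec_mulVec,
    ← mulVec_mulVec, ← mulVec_mulVec, linearizedInput_mulVec, mulVec_add, mulVec_smul]

end QuadraticTerm

section TransferFunctions

variable {n : ℕ} (E A N : Matrix (Fin n) (Fin n) ℂ) (Q : Matrix (Fin n) (Fin n × Fin n) ℂ)
  (B C : Fin n → ℂ) (s t : ℂ)

theorem H1_eq_y1_dotProduct : H1 E A B C s = y1 E A C s ⬝ᵥ B :=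
  dotProduct_inv_mulVec _ _ _

theorem C2_eq_linearizedInput_transpose_mulVec :
    C2 E A N Q B C s t = (linearizedInput N Q (x1 E A B t))ᵀ *ᵥ y1 E A C (s + t) :=
  (linearizedInput_transpose_mulVec _ _ _ _).symm

variable {Q}

theorem B2_eq_linearizedInput_mulVec (hQ : QSymm Q) :
    B2 E A N Q B s t =
      linearizedInput N Q (x1 E A B t) *ᵥ x1 E A B s + (1 / 2 : ℂ) • (N *ᵥ x1 E A B t) := by
  rw [B2, hQ, linearizedInput_mulVec, mulVec_add, smul_add, add_assoc]

theorem x2_comm (hQ : QSymm Q) : x2 E A N Q B s t = x2 E A N Q B t s := by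
  rw [x2, x2, B2, B2, hQ, add_comm s, add_comm (x1 E A B s)]

theorem H2_comm (hQ : QSymm Q) : H2 E A N Q B C s t = H2 E A N Q B C t s := by
  rw [H2, H2, x2_comm E A N B s t hQ]

variable {E A s t}

theorem hasDerivAt_x1 (hs : IsUnit (Gm E A s)) :
    HasDerivAt (x1 E A B) (-((Gm E A s)⁻¹ *ᵥ (E *ᵥ x1 E A B s))) s := by
  refine (hasDerivAt_inv_mulVec (hasDerivAt_Gm E A s) hs (hasDerivAt_const s B)).congr_deriv ?_
  rw [zero_sub, mulVec_neg, x1]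

theorem hasDerivAt_B2_fst (hQ : QSymm Q) {x' : Fin n → ℂ} (hx : HasDerivAt (x1 E A B) x' s) :
    HasDerivAt (fun τ => B2 E A N Q B τ t) (linearizedInput N Q (x1 E A B t) *ᵥ x') s := by
  simp only [B2_eq_linearizedInput_mulVec E A N B _ t hQ]
  exact ((linearizedInput N Q (x1 E A B t)).mulVecLin.toContinuousLinearMap.hasFDerivAt
    |>.comp_hasDerivAt s hx).add_const _

theorem hasDerivAt_x2_fst (hQ : QSymm Q) (hs : IsUnit (Gm E A s)) (hst : IsUnit (Gm E A (s + t))) :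
    HasDerivAt (fun τ => x2 E A N Q B τ t)
      ((Gm E A (s + t))⁻¹ *ᵥ (linearizedInput N Q (x1 E A B t) *ᵥ
        -((Gm E A s)⁻¹ *ᵥ (E *ᵥ x1 E A B s)) - E *ᵥ x2 E A N Q B s t)) s :=
  hasDerivAt_inv_mulVec (hasDerivAt_Gm_add_const E A s t) hst
    (hasDerivAt_B2_fst N B hQ (hasDerivAt_x1 B hs))

theorem hasDerivAt_H2_fst (hQ : QSymm Q) (hs : IsUnit (Gm E A s)) (hst : IsUnit (Gm E A (s + t))) :
    HasDerivAt (fun τ => H2 E A N Q B C τ t)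
      (-(y2 E A N Q B C s t ⬝ᵥ (E *ᵥ x1 E A B s)) -
        y1 E A C (s + t) ⬝ᵥ (E *ᵥ x2 E A N Q B s t)) s := by
  have dual_eq : y1 E A C (s + t) ⬝ᵥ (linearizedInput N Q (x1 E A B t) *ᵥ
      ((Gm E A s)⁻¹ *ᵥ (E *ᵥ x1 E A B s))) = y2 E A N Q B C s t ⬝ᵥ (E *ᵥ x1 E A B s) := by
    rw [← dotProduct_transpose_mulVec, dotProduct_comm,
      ← C2_eq_linearizedInput_transpose_mulVec, dotProduct_inv_mulVec, y2]
  refine ((dotProductBilin ℂ ℂ C).toContinuousLinearMap.hasFDerivAt.comp_hasDerivAt s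
    (hasDerivAt_x2_fst N B hQ hs hst)).congr_deriv ?_
  change C ⬝ᵥ ((Gm E A (s + t))⁻¹ *ᵥ _) = _
  rw [dotProduct_inv_mulVec, ← y1, dotProduct_sub, mulVec_neg, dotProduct_neg, dual_eq]

end TransferFunctions

section GalerkinReduction

variable {n r : ℕ} {E A N : Matrix (Fin n) (Fin n) ℂ} {Q : Matrix (Fin n) (Fin n × Fin n) ℂ}
  {B C : Fin n → ℂ} {V W : Matrix (Fin n) (Fin r) ℂ} {s t : ℂ}

local notation "Eᵣ" => Wᵀ * E * V
local notation "Aᵣ" => Wᵀ * A * V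
local notation "Nᵣ" => Wᵀ * N * V
local notation "Qᵣ" => Wᵀ * Q * (V ⊗ₖ V)
local notation "Bᵣ" => Wᵀ *ᵥ B
local notation "Cᵣ" => Vᵀ *ᵥ C

theorem Gm_reduced : Gm Eᵣ Aᵣ s = Wᵀ * Gm E A s * V := by
  simp only [Gm, Matrix.mul_sub, Matrix.sub_mul, Matrix.mul_smul, Matrix.smul_mul]

theorem mulVec_x1_reduced (hG : IsUnit (Gm E A s)) (hGr : IsUnit (Wᵀ * Gm E A s * V))
    (hV : ∃ c, x1 E A B s = V *ᵥ c) : V *ᵥ x1 Eᵣ Aᵣ Bᵣ s = x1 E A B s := by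
  rw [x1, Gm_reduced]
  exact mulVec_inv_mul_mul_mulVec hG hGr hV

theorem mulVec_y1_reduced (hG : IsUnit (Gm E A s)) (hGr : IsUnit (Wᵀ * Gm E A s * V))
    (hW : ∃ d, y1 E A C s = W *ᵥ d) : W *ᵥ y1 Eᵣ Aᵣ Cᵣ s = y1 E A C s := by
  rw [y1, Gm_reduced]
  exact mulVec_transpose_inv_mul_mul_mulVec hG hGr hW

theorem B2_reduced (hs : V *ᵥ x1 Eᵣ Aᵣ Bᵣ s = x1 E A B s)
    (ht : V *ᵥ x1 Eᵣ Aᵣ Bᵣ t = x1 E A B t) :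
    B2 Eᵣ Aᵣ Nᵣ Qᵣ Bᵣ s t = Wᵀ *ᵥ B2 E A N Q B s t := by
  rw [B2, B2, mul_kronecker_mulVec_vkron, ← mulVec_mulVec, ← mulVec_mulVec, mulVec_add V, hs, ht,
    mulVec_add Wᵀ, mulVec_smul]

theorem mulVec_x2_reduced (hG : IsUnit (Gm E A (s + t)))
    (hGr : IsUnit (Wᵀ * Gm E A (s + t) * V)) (hs : V *ᵥ x1 Eᵣ Aᵣ Bᵣ s = x1 E A B s)
    (ht : V *ᵥ x1 Eᵣ Aᵣ Bᵣ t = x1 E A B t) (hV : ∃ c, x2 E A N Q B s t = V *ᵥ c) :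
    V *ᵥ x2 Eᵣ Aᵣ Nᵣ Qᵣ Bᵣ s t = x2 E A N Q B s t := by
  rw [x2, Gm_reduced, B2_reduced hs ht]
  exact mulVec_inv_mul_mul_mulVec hG hGr hV

theorem C2_reduced (ht : V *ᵥ x1 Eᵣ Aᵣ Bᵣ t = x1 E A B t)
    (hst : W *ᵥ y1 Eᵣ Aᵣ Cᵣ (s + t) = y1 E A C (s + t)) :
    C2 Eᵣ Aᵣ Nᵣ Qᵣ Bᵣ Cᵣ s t = Vᵀ *ᵥ C2 E A N Q B C s t := by
  rw [C2_eq_linearizedInput_transpose_mulVec, C2_eq_linearizedInput_transpose_mulVec,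
    linearizedInput_transpose_mul_mul, ht, transpose_mul, transpose_mul, transpose_transpose,
    ← mulVec_mulVec, ← mulVec_mulVec, hst]

theorem mulVec_y2_reduced (hG : IsUnit (Gm E A s)) (hGr : IsUnit (Wᵀ * Gm E A s * V))
    (ht : V *ᵥ x1 Eᵣ Aᵣ Bᵣ t = x1 E A B t)
    (hst : W *ᵥ y1 Eᵣ Aᵣ Cᵣ (s + t) = y1 E A C (s + t))
    (hW : ∃ d, y2 E A N Q B C s t = W *ᵥ d) :
    W *ᵥ y2 Eᵣ Aᵣ Nᵣ Qᵣ Bᵣ Cᵣ s t = y2 E A N Q B C s t := by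
  rw [y2, Gm_reduced, C2_reduced ht hst]
  exact mulVec_transpose_inv_mul_mul_mulVec hG hGr hW

theorem H1_eq_reduced_of_x1 (hx : V *ᵥ x1 Eᵣ Aᵣ Bᵣ s = x1 E A B s) :
    H1 E A B C s = H1 Eᵣ Aᵣ Bᵣ Cᵣ s := by
  rw [H1, H1, ← hx, dotProduct_comm (Vᵀ *ᵥ C), dotProduct_transpose_mulVec]

theorem H1_eq_reduced_of_y1 (hy : W *ᵥ y1 Eᵣ Aᵣ Cᵣ s = y1 E A C s) :
    H1 E A B C s = H1 Eᵣ Aᵣ Bᵣ Cᵣ s := by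
  rw [H1_eq_y1_dotProduct, H1_eq_y1_dotProduct, dotProduct_transpose_mulVec, hy, dotProduct_comm]

theorem H2_eq_reduced (hx : V *ᵥ x2 Eᵣ Aᵣ Nᵣ Qᵣ Bᵣ s t = x2 E A N Q B s t) :
    H2 E A N Q B C s t = H2 Eᵣ Aᵣ Nᵣ Qᵣ Bᵣ Cᵣ s t := by
  rw [H2, H2, ← hx, dotProduct_comm (Vᵀ *ᵥ C), dotProduct_transpose_mulVec]

theorem deriv_H2_fst_eq_reduced (hQ : QSymm Q)
    (hGs : IsUnit (Gm E A s)) (hGst : IsUnit (Gm E A (s + t)))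
    (hGrs : IsUnit (Wᵀ * Gm E A s * V)) (hGrst : IsUnit (Wᵀ * Gm E A (s + t) * V))
    (hx1 : V *ᵥ x1 Eᵣ Aᵣ Bᵣ s = x1 E A B s)
    (hx2 : V *ᵥ x2 Eᵣ Aᵣ Nᵣ Qᵣ Bᵣ s t = x2 E A N Q B s t)
    (hy1 : W *ᵥ y1 Eᵣ Aᵣ Cᵣ (s + t) = y1 E A C (s + t))
    (hy2 : W *ᵥ y2 Eᵣ Aᵣ Nᵣ Qᵣ Bᵣ Cᵣ s t = y2 E A N Q B C s t) :
    deriv (fun τ => H2 E A N Q B C τ t) s =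
      deriv (fun τ => H2 Eᵣ Aᵣ Nᵣ Qᵣ Bᵣ Cᵣ τ t) s := by
  rw [← Gm_reduced] at hGrs hGrst
  rw [(hasDerivAt_H2_fst N B C hQ hGs hGst).deriv,
    (hasDerivAt_H2_fst _ _ _ (hQ.mul_kronecker V W) hGrs hGrst).deriv,
    dotProduct_transpose_mul_mul_mulVec, dotProduct_transpose_mul_mul_mulVec, hx1, hx2, hy1, hy2]

theorem benner_breiten_moment_matching_general (hQ : QSymm Q)
    (hGs : IsUnit (Gm E A s)) (hGt : IsUnit (Gm E A t)) (hGst : IsUnit (Gm E A (s + t)))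
    (hGrs : IsUnit (Wᵀ * Gm E A s * V)) (hGrt : IsUnit (Wᵀ * Gm E A t * V))
    (hGrst : IsUnit (Wᵀ * Gm E A (s + t) * V))
    (hVs : ∃ c, x1 E A B s = V *ᵥ c) (hVt : ∃ c, x1 E A B t = V *ᵥ c)
    (hVst : ∃ c, x2 E A N Q B s t = V *ᵥ c)
    (hWy1 : ∃ d, y1 E A C (s + t) = W *ᵥ d)
    (hWst : ∃ d, y2 E A N Q B C s t = W *ᵥ d) (hWts : ∃ d, y2 E A N Q B C t s = W *ᵥ d) :
    H1 E A B C s = H1 Eᵣ Aᵣ Bᵣ Cᵣ s ∧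
    H1 E A B C t = H1 Eᵣ Aᵣ Bᵣ Cᵣ t ∧
    H1 E A B C (s + t) = H1 Eᵣ Aᵣ Bᵣ Cᵣ (s + t) ∧
    H2 E A N Q B C s t = H2 Eᵣ Aᵣ Nᵣ Qᵣ Bᵣ Cᵣ s t ∧
    deriv (fun τ => H2 E A N Q B C τ t) s =
      deriv (fun τ => H2 Eᵣ Aᵣ Nᵣ Qᵣ Bᵣ Cᵣ τ t) s ∧
    deriv (fun τ => H2 E A N Q B C s τ) t =
      deriv (fun τ => H2 Eᵣ Aᵣ Nᵣ Qᵣ Bᵣ Cᵣ s τ) t := by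
  have hs := mulVec_x1_reduced hGs hGrs hVs
  have ht := mulVec_x1_reduced hGt hGrt hVt
  have hx2 := mulVec_x2_reduced hGst hGrst hs ht hVst
  have hy1 := mulVec_y1_reduced hGst hGrst hWy1
  have hy2 := mulVec_y2_reduced hGs hGrs ht hy1 hWst
  refine ⟨H1_eq_reduced_of_x1 hs, H1_eq_reduced_of_x1 ht, H1_eq_reduced_of_y1 hy1,
    H2_eq_reduced hx2, deriv_H2_fst_eq_reduced hQ hGs hGst hGrs hGrst hs hx2 hy1 hy2, ?_⟩
  simp only [H2_comm _ _ _ _ _ s _ hQ, H2_comm _ _ _ _ _ s _ (hQ.mul_kronecker V W)]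
  rw [x2_comm _ _ _ _ s t hQ, x2_comm _ _ _ _ s t (hQ.mul_kronecker V W)] at hx2
  rw [add_comm s t] at hGst hGrst hy1
  have hy2_swap := mulVec_y2_reduced hGt hGrt hs hy1 hWts
  exact deriv_H2_fst_eq_reduced hQ hGt hGst hGrt hGrst ht hx2 hy1 hy2_swap

end GalerkinReduction

theorem benner_breiten_moment_matching {n r k : ℕ}
    (E A N : Matrix (Fin n) (Fin n) ℂ) (Q : Matrix (Fin n) (Fin n × Fin n) ℂ)
    (B C : Fin n → ℂ) (V W : Matrix (Fin n) (Fin r) ℂ) (σ : Fin k → ℂ)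
    (hQ : QSymm Q)
    (hG : ∀ i, IsUnit (Gm E A (σ i))) (hG2 : ∀ i, IsUnit (Gm E A (2 * σ i)))
    (hGr : ∀ i, IsUnit (Wᵀ * Gm E A (σ i) * V))
    (hGr2 : ∀ i, IsUnit (Wᵀ * Gm E A (2 * σ i) * V))
    (hVx1 : ∀ i, ∃ c : Fin r → ℂ, x1 E A B (σ i) = V *ᵥ c)
    (hVx2 : ∀ i, ∃ c : Fin r → ℂ, x2 E A N Q B (σ i) (σ i) = V *ᵥ c)
    (hWy1 : ∀ i, ∃ d : Fin r → ℂ, y1 E A C (2 * σ i) = W *ᵥ d)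
    (hWy2 : ∀ i, ∃ d : Fin r → ℂ, y2 E A N Q B C (σ i) (σ i) = W *ᵥ d) :
    ∀ i,
      H1 E A B C (σ i) =
        H1 (Wᵀ * E * V) (Wᵀ * A * V) (Wᵀ *ᵥ B) (Vᵀ *ᵥ C) (σ i) ∧
      H1 E A B C (2 * σ i) =
        H1 (Wᵀ * E * V) (Wᵀ * A * V) (Wᵀ *ᵥ B) (Vᵀ *ᵥ C) (2 * σ i) ∧
      H2 E A N Q B C (σ i) (σ i) =
        H2 (Wᵀ * E * V) (Wᵀ * A * V) (Wᵀ * N * V) (Wᵀ * Q * (V ⊗ₖ V))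
          (Wᵀ *ᵥ B) (Vᵀ *ᵥ C) (σ i) (σ i) ∧
      deriv (fun s => H2 E A N Q B C s (σ i)) (σ i) =
        deriv (fun s => H2 (Wᵀ * E * V) (Wᵀ * A * V) (Wᵀ * N * V) (Wᵀ * Q * (V ⊗ₖ V))
          (Wᵀ *ᵥ B) (Vᵀ *ᵥ C) s (σ i)) (σ i) ∧
      deriv (fun s => H2 E A N Q B C (σ i) s) (σ i) =
        deriv (fun s => H2 (Wᵀ * E * V) (Wᵀ * A * V) (Wᵀ * N * V) (Wᵀ * Q * (V ⊗ₖ V))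
          (Wᵀ *ᵥ B) (Vᵀ *ᵥ C) (σ i) s) (σ i) := by
  intro i
  rw [two_mul (σ i)]
  simp only [two_mul] at hG2 hGr2 hWy1
  exact (benner_breiten_moment_matching_general hQ (hG i) (hG i) (hG2 i) (hGr i) (hGr i) (hGr2 i)
    (hVx1 i) (hVx1 i) (hVx2 i) (hWy1 i) (hWy2 i) (hWy2 i)).2
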